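/- For every integer n ≥ 1, the number of order ideals of the four-color tetrahedral poset T_n({b,y,o,g}) is given by the alternating sign matrix product formula: |J(T_n({b,y,o,g}))| · ∏_{j=0}^{n−1} (n+j)! = ∏_{j=0}^{n−1} (3j+1)!. -/

import Mathlib

open scoped Classical

noncomputable section

/-- `V3 n` is the set `{(a,b,c) ∈ ℤ≥0³ : a + b + c ≤ n - 2}`. -/
def V3 (n : ℕ) : Finset (ℤ × ℤ × ℤ) :=
  ((Finset.Icc (0:ℤ) (n:ℤ) ×ˢ Finset.Icc (0:ℤ) (n:ℤ) ×ˢ Finset.Icc (0:ℤ) (n:ℤ)).filter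
    (fun p => p.1 + p.2.1 + p.2.2 ≤ (n:ℤ) - 2))

/-- The six edge vectors. -/
def vr : ℤ × ℤ × ℤ := (1,0,0)
def vg : ℤ × ℤ × ℤ := (0,1,0)
def vy : ℤ × ℤ × ℤ := (0,0,1)
def vb : ℤ × ℤ × ℤ := (-1,1,0)
def vo : ℤ × ℤ × ℤ := (-1,0,1)
def vs : ℤ × ℤ × ℤ := (0,1,-1)

/-- One step: add a vector of `S`, staying inside `W`. -/
def step3 (S : Set (ℤ × ℤ × ℤ)) (W : Finset (ℤ × ℤ × ℤ)) (u v : ℤ × ℤ × ℤ) : Prop :=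
  u ∈ W ∧ v ∈ W ∧ ∃ e ∈ S, v = u + e

/-- The order relation of `T_n(S)`: reflexive-transitive closure of `step3`,
restricted to `W`. -/
def le3 (S : Set (ℤ × ℤ × ℤ)) (W : Finset (ℤ × ℤ × ℤ)) (u v : ℤ × ℤ × ℤ) : Prop :=
  u ∈ W ∧ v ∈ W ∧ Relation.ReflTransGen (step3 S W) u v

/-- An order ideal: a downward closed subset of `W`. -/
def IsIdeal3 (S : Set (ℤ × ℤ × ℤ)) (W : Finset (ℤ × ℤ × ℤ))
    (I : Finset (ℤ × ℤ × ℤ)) : Prop :=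
  I ⊆ W ∧ ∀ u v : ℤ × ℤ × ℤ, le3 S W u v → v ∈ I → u ∈ I

/-- The set of all order ideals of `T_n(S)`. -/
def ideals3 (S : Set (ℤ × ℤ × ℤ)) (W : Finset (ℤ × ℤ × ℤ)) :
    Finset (Finset (ℤ × ℤ × ℤ)) :=
  W.powerset.filter (fun I => IsIdeal3 S W I)

/-- The rank generating function `F(J(T_n(S)),q) = Σ_{I} q^{|I|}`. -/
def genF3 (S : Set (ℤ × ℤ × ℤ)) (W : Finset (ℤ × ℤ × ℤ)) : Polynomial ℤ :=
  ∑ I ∈ ideals3 S W, Polynomial.X ^ I.card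

end

/-! ### The six-vertex model at the combinatorial point -/

namespace SixVertex

section Weights

variable {R : Type*} [CommRing R]

/-- Boltzmann weight of a vertex with spectral parameters `x` (row) and `y` (column) and edge states
`l` (left), `t` (top), `r` (right), `b` (bottom). -/
def weight (ω x y : R) : Bool → Bool → Bool → Bool → R
  | false, false, false, false => x - ω * y
  | true, true, true, true => x - ω * y
  | false, true, false, true => y - ω * x
  | true, false, true, false => y - ω * x
  | false, false, true, true => 1 - ω
  | true, true, false, false => (1 - ω) * (x * y)
  | _, _, _, _ => 0

/-- The intertwiner of two columns, with states above (`s`, `t`) and below (`p`, `q`). -/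
def crossing (ω y y' : R) : Bool → Bool → Bool → Bool → R
  | false, false, false, false => y' - ω * y
  | true, true, true, true => y' - ω * y
  | false, true, false, true => (1 - ω) * y
  | true, false, true, false => (1 - ω) * y'
  | false, true, true, false => (1 + ω) * (y' - y)
  | true, false, false, true => (1 + ω) * (y' - y)
  | _, _, _, _ => 0

/-- The weight of a column of `n` vertices with top state `t` and bottom state `b`, as a matrix
indexed by the states of the edges to the left and to the right of the column. -/
def column (ω : R) : (n : ℕ) → (Fin n → R) → R → Bool → Bool →
    Matrix (Fin n → Bool) (Fin n → Bool) R
  | 0, _, _, t, b => Matrix.of fun _ _ => if t = b then 1 else 0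
  | n + 1, x, y, t, b => Matrix.of fun l r =>
      ∑ m, weight ω (x 0) y (l 0) t (r 0) m *
        column ω n (Fin.tail x) y m b (Fin.tail l) (Fin.tail r)

theorem column_zero_apply (ω : R) (x : Fin 0 → R) (y : R) (t b : Bool) (l r : Fin 0 → Bool) :
    column ω 0 x y t b l r = if t = b then 1 else 0 := rfl

theorem column_succ_apply (ω : R) {n : ℕ} (x : Fin (n + 1) → R) (y : R) (t b : Bool)
    (l r : Fin (n + 1) → Bool) :
    column ω (n + 1) x y t b l r = ∑ m, weight ω (x 0) y (l 0) t (r 0) m *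
      column ω n (Fin.tail x) y m b (Fin.tail l) (Fin.tail r) := rfl

set_option maxHeartbeats 2000000 in
theorem yang_baxter {ω : R} (hω : ω ^ 2 + ω + 1 = 0) (x y y' : R) (l r s t b c : Bool) :
    ∑ p, ∑ q, ∑ m, crossing ω y y' s t p q * (weight ω x y l p m b * weight ω x y' m q r c) =
      ∑ p, ∑ q, ∑ m, weight ω x y' l s m p * weight ω x y m t r q * crossing ω y y' p q b c := by
  have h2 : ω ^ 2 = -ω - 1 := by linear_combination hω
  have h3 : ω ^ 3 = 1 := by linear_combination (ω - 1) * hω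
  cases l <;> cases r <;> cases s <;> cases t <;> cases b <;> cases c <;>
    simp [weight, crossing] <;> ring_nf <;> simp only [h2, h3] <;> ring

theorem sum_bool_cons {M : Type*} [AddCommMonoid M] {n : ℕ} (f : (Fin (n + 1) → Bool) → M) :
    ∑ v, f v = ∑ m : Bool, ∑ v : Fin n → Bool, f (Fin.cons m v) := by
  rw [← (Fin.consEquiv fun _ => Bool).sum_comp, Fintype.sum_prod_type]
  rfl

theorem column_mul_column_succ (ω : R) {n : ℕ} (x : Fin (n + 1) → R) (y y' : R) (t b t' b' : Bool)
    (l r : Fin (n + 1) → Bool) :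
    (column ω (n + 1) x y t b * column ω (n + 1) x y' t' b') l r =
      ∑ p, ∑ q, (∑ m, weight ω (x 0) y (l 0) t m p * weight ω (x 0) y' m t' (r 0) q) *
        (column ω n (Fin.tail x) y p b * column ω n (Fin.tail x) y' q b')
          (Fin.tail l) (Fin.tail r) := by
  simp only [Matrix.mul_apply, sum_bool_cons, column_succ_apply, Fin.cons_zero, Fin.tail_cons,
    Fintype.sum_bool]
  simp only [mul_add, add_mul, Finset.sum_add_distrib, Finset.mul_sum]
  have e : ∀ f g h k : R, f * g * (h * k) = (f * h) * (g * k) := fun f g h k => by ring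
  simp only [e]
  abel

theorem crossing_column {ω : R} (hω : ω ^ 2 + ω + 1 = 0) : ∀ {n : ℕ} (x : Fin n → R) (y y' : R)
    (s t b c : Bool) (l r : Fin n → Bool),
    ∑ p, ∑ q, crossing ω y y' s t p q * (column ω n x y p b * column ω n x y' q c) l r =
      ∑ p, ∑ q, (column ω n x y' s p * column ω n x y t q) l r * crossing ω y y' p q b c := by
  intro n
  induction n with
  | zero =>
    intro x y y' s t b c l r
    cases s <;> cases t <;> cases b <;> cases c <;> simp [column_zero_apply, Matrix.mul_apply]
  | succ n ih =>
    intro x y y' s t b c l r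
    simp only [column_mul_column_succ]
    set P := fun p b q c => (column ω n (Fin.tail x) y p b * column ω n (Fin.tail x) y' q c)
      (Fin.tail l) (Fin.tail r) with hP
    set Q := fun p b q c => (column ω n (Fin.tail x) y' p b * column ω n (Fin.tail x) y q c)
      (Fin.tail l) (Fin.tail r) with hQ
    have key : ∀ u v, ∑ p, ∑ q, crossing ω y y' u v p q * P p b q c =
        ∑ p, ∑ q, Q u p v q * crossing ω y y' p q b c := fun u v => ih _ _ _ _ _ _ _ _ _
    have yb := fun u v => yang_baxter hω (x 0) y y' (l 0) (r 0) s t u v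
    calc _ = ∑ u, ∑ v, (∑ p, ∑ q, ∑ m, crossing ω y y' s t p q *
          (weight ω (x 0) y (l 0) p m u * weight ω (x 0) y' m q (r 0) v)) * P u b v c := by
            simp only [Fintype.sum_bool]; ring
      _ = ∑ u, ∑ v, (∑ m, weight ω (x 0) y' (l 0) s m u * weight ω (x 0) y m t (r 0) v) *
          ∑ p, ∑ q, crossing ω y y' u v p q * P p b q c := by
            simp only [yb]
            simp only [Fintype.sum_bool]; ring
      _ = _ := by
            simp only [key]
            simp only [Fintype.sum_bool]; ring

/-- The creation operator: a column with top state `false` and bottom state `true`. -/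
def creation (ω : R) {n : ℕ} (x : Fin n → R) (y : R) : Matrix (Fin n → Bool) (Fin n → Bool) R :=
  column ω n x y false true

/-- The partition function of an `n × m` lattice with left state `l` and right state `r`. -/
def latticeSum (ω : R) {n m : ℕ} (x : Fin n → R) (y : Fin m → R) (l r : Fin n → Bool) : R :=
  (List.ofFn fun j => creation ω x (y j)).prod l r

/-- The partition function with domain wall boundary conditions. -/
def partitionFun (ω : R) {n : ℕ} (x y : Fin n → R) : R :=
  latticeSum ω x y (fun _ => false) (fun _ => true)

end Weights

section Symmetry

variable {K : Type*} [Field K]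

theorem creation_commute {ω : K} (hω : ω ^ 2 + ω + 1 = 0) {n : ℕ} (x : Fin n → K) {y y' : K}
    (hy : y' - ω * y ≠ 0) : Commute (creation ω x y) (creation ω x y') := by
  ext l r
  have h := crossing_column hω x y y' false false true true l r
  simp only [Fintype.sum_bool, crossing, zero_mul, mul_zero, add_zero, zero_add] at h
  rw [mul_comm] at h
  exact mul_right_cancel₀ hy h

theorem partitionFun_comp_perm {ω : K} (hω : ω ^ 2 + ω + 1 = 0) {n : ℕ} (x y : Fin n → K)
    (hy : ∀ i j, i ≠ j → y j - ω * y i ≠ 0) (σ : Equiv.Perm (Fin n)) :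
    partitionFun ω x (y ∘ σ) = partitionFun ω x y := by
  unfold partitionFun latticeSum
  have hp := σ.ofFn_comp_perm fun j => creation ω x (y j)
  refine congrFun (congrFun (hp.prod_eq' ?_) _) _
  rw [List.pairwise_ofFn]
  intro i j hij
  simp only [Function.comp]
  exact creation_commute hω x (hy _ _ fun h => hij.ne (σ.injective h))

end Symmetry

end SixVertex

/-! ### Polynomial functions of bounded degree -/

section PolyFun

variable {K : Type*} [Field K]

/-- The space of functions on `K` given by a polynomial of degree less than `d`. -/
noncomputable def polyFun (K : Type*) [Field K] (d : ℕ) : Submodule K (K → K) :=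
  (Polynomial.degreeLT K d).map (LinearMap.pi fun u => Polynomial.leval u)

theorem mem_polyFun {d : ℕ} {f : K → K} :
    f ∈ polyFun K d ↔ ∃ p : Polynomial K, p.degree < d ∧ ∀ u, p.eval u = f u := by
  simp only [polyFun, Submodule.mem_map, Polynomial.mem_degreeLT, funext_iff, LinearMap.pi_apply,
    Polynomial.leval_apply]

theorem pow_mem_polyFun {e d : ℕ} (h : e < d) : (fun u : K => u ^ e) ∈ polyFun K d :=
  mem_polyFun.2 ⟨Polynomial.X ^ e, by simpa using h, by simp⟩

theorem mul_linear_mem_polyFun {d : ℕ} {f : K → K} (hf : f ∈ polyFun K d) (α β : K) :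
    (fun u => f u * (α + β * u)) ∈ polyFun K (d + 1) := by
  obtain ⟨p, hp, h⟩ := mem_polyFun.1 hf
  refine mem_polyFun.2 ⟨p * (Polynomial.C β * Polynomial.X + Polynomial.C α), ?_, fun u => ?_⟩
  · by_cases h0 : p = 0
    · simp [h0]
    have h2 := Polynomial.degree_linear_le (a := β) (b := α)
    rw [Polynomial.degree_eq_natDegree h0] at hp
    have hp' : p.natDegree < d := by exact_mod_cast hp
    refine lt_of_le_of_lt (Polynomial.degree_mul_le _ _) ?_
    calc p.degree + _ ≤ (p.natDegree : WithBot ℕ) + 1 := by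
          rw [Polynomial.degree_eq_natDegree h0]; gcongr
      _ < _ := by norm_cast; omega
  · simp only [Polynomial.eval_mul, Polynomial.eval_add, Polynomial.eval_C, Polynomial.eval_X, h]
    ring

theorem mul_prod_linear_mem_polyFun {d : ℕ} {f : K → K} (hf : f ∈ polyFun K d) :
    ∀ {m : ℕ} (α β : Fin m → K), (fun u => f u * ∏ i, (α i + β i * u)) ∈ polyFun K (d + m)
  | 0, _, _ => by simpa using hf
  | m + 1, α, β => by
    have h := mul_linear_mem_polyFun
      (mul_prod_linear_mem_polyFun hf (fun i => α i.castSucc) fun i => β i.castSucc)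
      (α (Fin.last m)) (β (Fin.last m))
    simpa only [Fin.prod_univ_castSucc, mul_assoc, add_assoc] using h

theorem mul_const_mem_polyFun {d : ℕ} {f : K → K} (hf : f ∈ polyFun K d) (c : K) :
    (fun u => f u * c) ∈ polyFun K d := by
  have : (fun u => f u * c) = c • f := by ext u; simp [mul_comm]
  rw [this]
  exact Submodule.smul_mem _ _ hf

theorem eq_zero_of_mem_polyFun {d : ℕ} {f : K → K} (hf : f ∈ polyFun K d) (s : Finset K)
    (hs : d ≤ s.card) (h : ∀ u ∈ s, f u = 0) (u : K) : f u = 0 := by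
  obtain ⟨p, hp, hpf⟩ := mem_polyFun.1 hf
  rw [← hpf, Polynomial.eq_zero_of_degree_lt_of_eval_finset_eq_zero s
    (lt_of_lt_of_le hp (by exact_mod_cast hs)) fun x hx => by rw [hpf, h x hx],
    Polynomial.eval_zero]

end PolyFun

namespace SixVertex

section Lattice

variable {R : Type*} [CommRing R]

theorem latticeSum_zero (ω : R) {n : ℕ} (x : Fin n → R) (y : Fin 0 → R) (l r : Fin n → Bool) :
    latticeSum ω x y l r = if l = r then 1 else 0 := by
  simp [latticeSum, Matrix.one_apply]

theorem latticeSum_succ (ω : R) {n m : ℕ} (x : Fin n → R) (y : Fin (m + 1) → R)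
    (l r : Fin n → Bool) :
    latticeSum ω x y l r = ∑ k, creation ω x (y 0) l k * latticeSum ω x (Fin.tail y) k r := by
  simp only [latticeSum, List.ofFn_succ, List.prod_cons, Matrix.mul_apply]
  rfl

theorem column_true_true_false (ω : R) : ∀ {n : ℕ} (x : Fin n → R) (y : R) (r : Fin n → Bool),
    column ω n x y true true (fun _ => false) r =
      if r = fun _ => false then ∏ i, (y - ω * x i) else 0
  | 0, x, y, r => by simp [column_zero_apply, Subsingleton.elim r fun _ => false]
  | n + 1, x, y, r => by
    have h := column_true_true_false ω (Fin.tail x) y (Fin.tail r)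
    have ht : Fin.tail (fun _ : Fin (n + 1) => false) = fun _ => false := rfl
    have e : (r = fun _ => false) ↔ r 0 = false ∧ Fin.tail r = fun _ => false := by
      simp [funext_iff, Fin.forall_fin_succ, Fin.tail]
    rw [column_succ_apply, ht, Fintype.sum_bool, h, Fin.prod_univ_succ]
    simp only [e]
    cases h0 : r 0 <;> simp [weight, Fin.tail]

theorem creation_cons_true (ω : R) {n : ℕ} (x : Fin (n + 1) → R) (y : R) (l k : Fin n → Bool)
    (b : Bool) :
    creation ω x y (Fin.cons true l) (Fin.cons b k) =
      if b = true then (y - ω * x 0) * creation ω (Fin.tail x) y l k else 0 := by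
  cases b <;> simp [creation, column_succ_apply, weight]

theorem creation_cons_false (ω : R) {n : ℕ} (x : Fin (n + 1) → R) (y : R) (l k : Fin n → Bool)
    (b : Bool) :
    creation ω x y (Fin.cons false l) (Fin.cons b k) =
      if b = true then (1 - ω) * column ω n (Fin.tail x) y true true l k
      else (x 0 - ω * y) * creation ω (Fin.tail x) y l k := by
  cases b <;> simp [creation, column_succ_apply, weight]

theorem latticeSum_cons_true (ω : R) {n : ℕ} (x : Fin (n + 1) → R) :
    ∀ {m : ℕ} (y : Fin m → R) (l r : Fin n → Bool),
    latticeSum ω x y (Fin.cons true l) (Fin.cons true r) =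
      (∏ j, (y j - ω * x 0)) * latticeSum ω (Fin.tail x) y l r
  | 0, y, l, r => by simp [latticeSum_zero]
  | m + 1, y, l, r => by
    rw [latticeSum_succ, sum_bool_cons, Fintype.sum_bool]
    simp only [creation_cons_true, latticeSum_cons_true ω x (Fin.tail y)]
    simp only [if_true, Bool.false_eq_true, if_false, zero_mul, Finset.sum_const_zero, add_zero]
    rw [latticeSum_succ, Fin.prod_univ_succ, Finset.mul_sum]
    refine Finset.sum_congr rfl fun k _ => ?_
    simp only [Fin.tail]
    ring

theorem const_eq_cons {n : ℕ} (b : Bool) :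
    (fun _ : Fin (n + 1) => b) = Fin.cons b fun _ : Fin n => b := by
  ext i; refine Fin.cases ?_ (fun i => ?_) i <;> simp

/-- When the corner weight vanishes, the first row and the first column are frozen. -/
theorem partitionFun_freeze (ω : R) {n : ℕ} (x y : Fin (n + 1) → R) (h : x 0 = ω * y 0) :
    partitionFun ω x y = (1 - ω) * (∏ i : Fin n, (y 0 - ω * x i.succ)) *
      (∏ j : Fin n, (y j.succ - ω * x 0)) * partitionFun ω (Fin.tail x) (Fin.tail y) := by
  unfold partitionFun
  rw [latticeSum_succ, sum_bool_cons, Fintype.sum_bool, const_eq_cons false, const_eq_cons true]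
  simp only [creation_cons_false, h, sub_self, zero_mul, if_true, Bool.false_eq_true, if_false,
    Finset.sum_const_zero, add_zero, latticeSum_cons_true, column_true_true_false]
  rw [Finset.sum_eq_single (fun _ => false)]
  · simp only [if_true, Fin.tail]
    ring
  · intro b _ hb
    simp [hb]
  · simp

theorem latticeSum_mem_polyFun {K : Type*} [Field K] (ω : K) {n : ℕ} (x : Fin n → K) :
    ∀ {m : ℕ} (y : Fin m → K) (l r : Fin n → Bool),
    (fun u => latticeSum ω (Fin.cons u x : Fin (n + 1) → K) y (Fin.cons false l) (Fin.cons true r))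
      ∈ polyFun K m
  | 0, y, l, r => by
    have : ∀ u, latticeSum ω (Fin.cons u x : Fin (n + 1) → K) y (Fin.cons false l)
        (Fin.cons true r) = 0 := fun u => by
      rw [latticeSum_zero, if_neg]
      intro h
      simpa using congrFun h 0
    simp only [this]
    exact Submodule.zero_mem _
  | m + 1, y, l, r => by
    have e : (fun u => latticeSum ω (Fin.cons u x : Fin (n + 1) → K) y (Fin.cons false l)
        (Fin.cons true r)) =
        (∑ k, fun u => (u ^ 0 * ∏ j, (Fin.tail y j + (-ω) * u)) *
          ((1 - ω) * column ω n x (y 0) true true l k * latticeSum ω x (Fin.tail y) k r)) +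
        ∑ k, fun u => latticeSum ω (Fin.cons u x : Fin (n + 1) → K) (Fin.tail y) (Fin.cons false k)
          (Fin.cons true r) * (-ω * y 0 + 1 * u) * creation ω x (y 0) l k := by
      ext u
      rw [latticeSum_succ, sum_bool_cons, Fintype.sum_bool]
      simp only [creation_cons_false, if_true, Bool.false_eq_true, if_false, latticeSum_cons_true,
        Fin.cons_zero, Fin.tail_cons, Pi.add_apply, Finset.sum_apply, neg_mul, ← sub_eq_add_neg]
      congr 1 <;> refine Finset.sum_congr rfl fun k _ => ?_ <;> ring
    rw [e]
    refine Submodule.add_mem _ (Submodule.sum_mem _ fun k _ => ?_)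
      (Submodule.sum_mem _ fun k _ => ?_)
    · have h := mul_prod_linear_mem_polyFun (K := K) (pow_mem_polyFun one_pos) (Fin.tail y)
        fun _ => -ω
      rw [add_comm] at h
      exact mul_const_mem_polyFun h _
    · exact mul_const_mem_polyFun
        (mul_linear_mem_polyFun (latticeSum_mem_polyFun ω x (Fin.tail y) k r) _ _) _

theorem partitionFun_mem_polyFun {K : Type*} [Field K] (ω : K) {n : ℕ} (x : Fin n → K)
    (y : Fin (n + 1) → K) :
    (fun u => partitionFun ω (Fin.cons u x) y) ∈ polyFun K (n + 1) := by
  unfold partitionFun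
  simp only [const_eq_cons]
  exact latticeSum_mem_polyFun ω x y _ _

end Lattice

end SixVertex

/-! ### The determinant with exponents `0, 1, 3, 4, 6, 7, …` -/

namespace SixVertex

section Determinant

variable {R : Type*} [CommRing R]

/-- The alternant with exponents `⌊3 j / 2⌋`. -/
noncomputable def alternant {N : ℕ} (z : Fin N → R) : R :=
  (Matrix.of fun i j : Fin N => z i ^ ((j : ℕ) + j / 2)).det

/-- The Vandermonde determinant. -/
noncomputable def vand {N : ℕ} (z : Fin N → R) : R := (Matrix.vandermonde z).det

theorem alternant_comp_perm {N : ℕ} (z : Fin N → R) (σ : Equiv.Perm (Fin N)) :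
    alternant (z ∘ σ) = (Equiv.Perm.sign σ : ℤ) * alternant z := by
  rw [alternant, alternant, ← Matrix.det_permute]
  rfl

theorem vand_comp_perm {N : ℕ} (z : Fin N → R) (σ : Equiv.Perm (Fin N)) :
    vand (z ∘ σ) = (Equiv.Perm.sign σ : ℤ) * vand z := by
  rw [vand, vand, ← Matrix.det_permute]
  rfl

theorem vand_succ {N : ℕ} (z : Fin (N + 1) → R) :
    vand z = (∏ i : Fin N, (z i.succ - z 0)) * vand (Fin.tail z) := by
  simp only [vand, Matrix.det_vandermonde, Fin.prod_univ_succ, Fin.prod_Ioi_zero,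
    Fin.prod_Ioi_succ, Fin.tail]

theorem vand_eq_zero {N : ℕ} {z : Fin N → R} {i j : Fin N} (hij : i ≠ j) (h : z i = z j) :
    vand z = 0 :=
  Matrix.det_zero_of_row_eq hij (by ext k; simp [Matrix.vandermonde_apply, h])

theorem alternant_eq_zero {N : ℕ} {z : Fin N → R} {i j : Fin N} (hij : i ≠ j) (h : z i = z j) :
    alternant z = 0 :=
  Matrix.det_zero_of_row_eq hij (by ext k; simp [h])

theorem alternant_succ_succ {N : ℕ} (z : Fin (N + 2) → R) (h : z 0 ^ 3 = z 1 ^ 3) :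
    alternant z = (z 1 - z 0) * (∏ k : Fin N, (z k.succ.succ ^ 3 - z 1 ^ 3)) *
      alternant (Fin.tail (Fin.tail z)) := by
  set U : Matrix (Fin (N + 2)) (Fin (N + 2)) R :=
    Matrix.of fun i j => if i = j then 1 else if (i : ℕ) + 2 = j then -z 1 ^ 3 else 0 with hU
  have hdet : U.det = 1 := by
    rw [Matrix.det_of_isUpperTriangular]
    · simp [hU]
    · intro i j hij
      have hlt : j < i := hij
      have h1 : i ≠ j := hlt.ne'
      have h2 : (i : ℕ) + 2 ≠ j := by have : (j : ℕ) < i := hlt; omega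
      simp [hU, h1, h2]
  set A : Matrix (Fin (N + 2)) (Fin (N + 2)) R :=
    Matrix.of fun i j => z i ^ ((j : ℕ) + j / 2) with hA
  let e : Fin 2 ⊕ Fin N ≃ Fin (N + 2) := finSumFinEquiv.trans (finCongr (add_comm 2 N))
  have e0 : ∀ i, e (Sum.inl i) = ⟨i, by omega⟩ := fun i => rfl
  have e1 : ∀ i : Fin N, e (Sum.inr i) = i.succ.succ := fun i => by
    ext; simp [e]
  have hcol1 : ∀ (i : Fin (N + 2)) (j : Fin 2), (A * U) i (e (Sum.inl j)) = z i ^ (j : ℕ) := by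
    intro i j
    rw [Matrix.mul_apply, Finset.sum_eq_single (e (Sum.inl j))]
    · have : (j : ℕ) / 2 = 0 := by omega
      simp [hA, hU, e0, this]
    · intro k _ hk
      have : (k : ℕ) + 2 ≠ (e (Sum.inl j) : Fin (N + 2)) := by rw [e0]; simp; omega
      simp [hU, hk, this]
    · simp
  have hcol2 : ∀ (i : Fin (N + 2)) (j : Fin N), (A * U) i (e (Sum.inr j)) =
      (z i ^ 3 - z 1 ^ 3) * z i ^ ((j : ℕ) + j / 2) := by
    intro i j
    have hne : (e (Sum.inr j)) ≠ j.castSucc.castSucc := by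
      rw [e1]; intro h; have := congrArg Fin.val h; simp at this; omega
    rw [Matrix.mul_apply, Finset.sum_eq_add (e (Sum.inr j)) j.castSucc.castSucc hne]
    · have h3 : (j : ℕ) + 1 + 1 + ((j : ℕ) + 1 + 1) / 2 = (j + j / 2) + 3 := by omega
      simp only [hA, hU, Matrix.of_apply, if_true, if_neg hne.symm]
      simp only [e1, Fin.val_succ, Fin.val_castSucc, h3, if_true]
      ring
    · rintro k - ⟨hk1, hk2⟩
      have : (k : ℕ) + 2 ≠ (e (Sum.inr j) : Fin (N + 2)) := by
        rw [e1]; intro h; apply hk2; ext; simp at h ⊢; omega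
      simp [hU, hk1, this]
    · simp
    · simp
  have hblock : (A * U).submatrix e e = Matrix.fromBlocks
      (Matrix.of fun i j : Fin 2 => z (e (Sum.inl i)) ^ (j : ℕ)) 0
      (Matrix.of fun (i : Fin N) (j : Fin 2) => z i.succ.succ ^ (j : ℕ))
      (Matrix.of fun i j : Fin N => (z i.succ.succ ^ 3 - z 1 ^ 3) *
        z i.succ.succ ^ ((j : ℕ) + j / 2)) := by
    ext i j
    rcases i with i | i <;> rcases j with j | j
    · simp [hcol1]
    · rw [Matrix.submatrix_apply, hcol2, Matrix.fromBlocks_apply₁₂, Matrix.zero_apply]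
      fin_cases i
      · have : e (Sum.inl 0) = 0 := rfl
        simp [this, h]
      · have : e (Sum.inl 1) = 1 := rfl
        simp [this]
    · simp [hcol1, e1]
    · rw [Matrix.submatrix_apply, hcol2, e1]; simp
  have hAU : A.det = (A * U).det := by rw [Matrix.det_mul, hdet, mul_one]
  change A.det = _
  rw [hAU, ← Matrix.det_submatrix_equiv_self e, hblock, Matrix.det_fromBlocks_zero₁₂,
    Matrix.det_fin_two]
  have hr := Matrix.det_mul_column (fun i : Fin N => z i.succ.succ ^ 3 - z 1 ^ 3)
    (Matrix.of fun i j : Fin N => z i.succ.succ ^ ((j : ℕ) + j / 2))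
  simp only [Matrix.of_apply] at hr ⊢
  rw [hr]
  have f0 : e (Sum.inl 0) = 0 := rfl
  have f1 : e (Sum.inl 1) = 1 := rfl
  simp only [f0, f1, alternant, Fin.tail, Fin.val_zero, Fin.val_one, pow_zero, pow_one]
  ring

theorem alternant_mem_polyFun {K : Type*} [Field K] {N d : ℕ} (z : Fin N → K) (hd : N + N / 2 < d) :
    (fun u => alternant (Fin.cons u z : Fin (N + 1) → K)) ∈ polyFun K d := by
  have e : (fun u => alternant (Fin.cons u z : Fin (N + 1) → K)) =
      ∑ j : Fin (N + 1), fun u => u ^ ((j : ℕ) + j / 2) * ((-1) ^ (j : ℕ) *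
        (Matrix.of fun i k : Fin N => z i ^ ((j.succAbove k : ℕ) + j.succAbove k / 2)).det) := by
    ext u
    rw [alternant, Matrix.det_succ_row_zero, Finset.sum_apply]
    refine Finset.sum_congr rfl fun j _ => ?_
    have : (Matrix.of fun i j : Fin (N + 1) => (Fin.cons u z : Fin (N + 1) → K) i ^
        ((j : ℕ) + j / 2)).submatrix Fin.succ j.succAbove =
        Matrix.of fun i k : Fin N => z i ^ ((j.succAbove k : ℕ) + j.succAbove k / 2) := by
      ext i k; simp
    rw [this]
    simp only [Matrix.of_apply, Fin.cons_zero]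
    ring
  rw [e]
  refine Submodule.sum_mem _ fun j _ => mul_const_mem_polyFun (pow_mem_polyFun ?_) _
  have := j.is_lt
  omega

end Determinant

end SixVertex

/-! ### The partition function as a ratio of determinants -/

namespace SixVertex

section Evaluation

variable {K : Type*} [Field K]

/-- The entries at even positions. -/
def evens {n : ℕ} (z : Fin (2 * n) → K) (i : Fin n) : K := z ⟨2 * i, by omega⟩

/-- The entries at odd positions. -/
def odds {n : ℕ} (z : Fin (2 * n) → K) (i : Fin n) : K := z ⟨2 * i + 1, by omega⟩

theorem prod_evens_mul_prod_odds {M : Type*} [CommMonoid M] : ∀ {n : ℕ} (f : Fin (2 * n) → M),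
    (∏ i : Fin n, f ⟨2 * i, by omega⟩) * (∏ i : Fin n, f ⟨2 * i + 1, by omega⟩) = ∏ i, f i
  | 0, f => by simp
  | n + 1, f => by
    have h := prod_evens_mul_prod_odds (n := n) fun i => f ⟨i + 2, by omega⟩
    have e : ∏ i, f i = f ⟨0, by omega⟩ * (f ⟨1, by omega⟩ *
        ∏ i : Fin (2 * n), f ⟨i + 2, by omega⟩) := by
      have h1 := Fin.prod_univ_succ (n := 2 * n + 1) f
      rw [Fin.prod_univ_succ (n := 2 * n)] at h1
      exact h1
    rw [e, ← h, Fin.prod_univ_succ, Fin.prod_univ_succ]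
    simp only [Fin.val_succ, Fin.val_zero, mul_add, mul_one, mul_zero, zero_add]
    simp only [add_right_comm]
    rw [mul_mul_mul_comm, mul_assoc]

/-- The constant relating the partition function to the ratio of determinants. -/
def ratioConst (ω : K) : ℕ → K
  | 0 => 1
  | n + 1 => (1 - ω) * (-ω) ^ n * ratioConst ω n

theorem partitionFun_mul_vand_of_frozen {ω : K} (hω : ω ^ 2 + ω + 1 = 0) {n : ℕ}
    (w : Fin (2 * n + 2) → K) (h : w 0 = ω * w 1)
    (ih : partitionFun ω (evens (n := n) (Fin.tail (Fin.tail w)))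
        (odds (n := n) (Fin.tail (Fin.tail w))) *
      vand (Fin.tail (Fin.tail w)) = ratioConst ω n * alternant (Fin.tail (Fin.tail w))) :
    partitionFun ω (evens (n := n + 1) w) (odds (n := n + 1) w) * vand w =
      ratioConst ω (n + 1) * alternant w := by
  have h3 : ω ^ 3 = 1 := by linear_combination (ω - 1) * hω
  have hx0 : evens (n := n + 1) w 0 = ω * odds (n := n + 1) w 0 := h
  rw [partitionFun_freeze ω _ _ hx0,
    alternant_succ_succ w (by rw [h]; linear_combination (w 1) ^ 3 * h3),
    vand_succ, vand_succ]
  have ex : Fin.tail (evens (n := n + 1) w) = evens (n := n) (Fin.tail (Fin.tail w)) := rfl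
  have ey : Fin.tail (odds (n := n + 1) w) = odds (n := n) (Fin.tail (Fin.tail w)) := rfl
  have hprod : (∏ i : Fin n, (odds (n := n + 1) w 0 - ω * evens (n := n + 1) w i.succ)) *
      (∏ j : Fin n, (odds (n := n + 1) w j.succ - ω * evens (n := n + 1) w 0)) =
      (-ω) ^ n * ∏ k : Fin (2 * n), (w k.succ.succ - ω ^ 2 * w 1) := by
    have hrow : (∏ i : Fin n, (odds (n := n + 1) w 0 - ω * evens (n := n + 1) w i.succ)) =
        (-ω) ^ n * ∏ i : Fin n, (evens (n := n + 1) w i.succ - ω ^ 2 * w 1) := by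
      have hconst : (-ω) ^ n = ∏ _i : Fin n, (-ω) := by simp
      rw [hconst, ← Finset.prod_mul_distrib]
      refine Finset.prod_congr rfl fun i _ => ?_
      change w 1 - ω * _ = _
      linear_combination (- w 1) * h3
    have hcol : (∏ j : Fin n, (odds (n := n + 1) w j.succ - ω * evens (n := n + 1) w 0)) =
        ∏ j : Fin n, (odds (n := n + 1) w j.succ - ω ^ 2 * w 1) := by
      refine Finset.prod_congr rfl fun i _ => ?_
      change _ - ω * w 0 = _
      rw [h]; ring
    rw [hrow, hcol, mul_assoc,
      ← prod_evens_mul_prod_odds fun k : Fin (2 * n) => w k.succ.succ - ω ^ 2 * w 1]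
    rfl
  have hcube : (∏ k : Fin (2 * n), (w k.succ.succ ^ 3 - w 1 ^ 3)) =
      (∏ k : Fin (2 * n), (w k.succ.succ - ω ^ 2 * w 1)) *
      (∏ k : Fin (2 * n), (w k.succ.succ - w 0)) *
      (∏ k : Fin (2 * n), (w k.succ.succ - w 1)) := by
    rw [← Finset.prod_mul_distrib, ← Finset.prod_mul_distrib]
    refine Finset.prod_congr rfl fun i _ => ?_
    rw [h]
    generalize w i.succ.succ = a
    linear_combination (a * w 1 * (a - w 1)) * hω
      - ((a * w 1 ^ 2) - w 1 ^ 3) * h3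
  rw [Fin.prod_univ_succ, ex, ey, hcube, ratioConst]
  change _ * ((w 1 - w 0) * _ * ((∏ k : Fin (2 * n), (w k.succ.succ - w 1)) * _)) = _
  generalize partitionFun ω (evens (n := n) (Fin.tail (Fin.tail w)))
    (odds (n := n) (Fin.tail (Fin.tail w))) = Z at ih ⊢
  generalize ∏ k : Fin (2 * n), (w k.succ.succ - ω ^ 2 * w 1) = Q at hprod ⊢
  generalize ∏ k : Fin (2 * n), (w k.succ.succ - w 1) = Q₁
  generalize hQ₀ : ∏ k : Fin (2 * n), (w k.succ.succ - w 0) = Q₀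
  linear_combination (1 - ω) * (w 1 - w 0) * Q₀ * Q₁ *
    (Z * vand (Fin.tail (Fin.tail w)) * hprod + (-ω) ^ n * Q * ih)

theorem partitionFun_mul_vand {ω : K} (hω : ω ^ 2 + ω + 1 = 0) : ∀ {n : ℕ} (z : Fin (2 * n) → K)
    (_ : Function.Injective z) (_ : ∀ i j, z i ≠ ω * z j),
    partitionFun ω (evens z) (odds z) * vand z = ratioConst ω n * alternant z
  | 0, z, _, _ => by
    rw [partitionFun, latticeSum_zero, if_pos (Subsingleton.elim _ _)]
    simp [vand, alternant, ratioConst]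
  | n + 1, z, hz, hgen => by
    have hω0 : ω ≠ 0 := by rintro rfl; simp at hω
    set z' : Fin (2 * n + 1) → K := Fin.tail (n := 2 * n + 1) z with hz'
    set x' : Fin n → K := Fin.tail (evens z) with hx'
    set F : K → Fin (2 * n + 2) → K := fun u => Fin.cons u z' with hF
    set f : K → K := fun u => partitionFun ω (Fin.cons u x' : Fin (n + 1) → K) (odds z) *
      vand (F u) - ratioConst ω (n + 1) * alternant (F u) with hf
    suffices hfz : f (z 0) = 0 by
      have e1 : (Fin.cons (z 0) x' : Fin (n + 1) → K) = evens z := Fin.cons_self_tail (evens z)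
      have e2 : F (z 0) = z := Fin.cons_self_tail (n := 2 * n + 1) z
      rw [hf] at hfz
      simp only [e1, e2] at hfz
      exact sub_eq_zero.1 hfz
    have hmem : f ∈ polyFun K (3 * n + 2) := by
      refine Submodule.sub_mem _ ?_ ?_
      · have h := mul_const_mem_polyFun (mul_prod_linear_mem_polyFun
          (partitionFun_mem_polyFun ω x' (odds z)) z' fun _ => -1) (vand z')
        have e : n + 1 + (2 * n + 1) = 3 * n + 2 := by ring
        rw [e] at h
        convert h using 2 with u
        rw [vand_succ, mul_assoc]
        simp only [hF, Fin.cons_zero, Fin.cons_succ, Fin.tail_cons, neg_one_mul, sub_eq_add_neg]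
      · have h := mul_const_mem_polyFun (alternant_mem_polyFun (d := 3 * n + 2) z' (by omega))
          (ratioConst ω (n + 1))
        convert h using 2 with u
        rw [mul_comm]
    set s : Finset K := Finset.univ.image z' ∪ Finset.univ.image (fun j => ω * odds z j) with hs
    have hcard : 3 * n + 2 ≤ s.card := by
      rw [hs, Finset.card_union_of_disjoint, Finset.card_image_of_injective,
        Finset.card_image_of_injective]
      · simp; omega
      · intro i j hij
        have := hz (mul_left_cancel₀ hω0 hij)
        ext
        simpa using this
      · intro i j hij
        exact Fin.succ_injective _ (hz hij)
      · rw [Finset.disjoint_left]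
        intro a ha hb
        obtain ⟨i, -, rfl⟩ := Finset.mem_image.1 ha
        obtain ⟨j, -, hj⟩ := Finset.mem_image.1 hb
        exact hgen _ _ hj.symm
    refine eq_zero_of_mem_polyFun hmem s hcard (fun u hu => ?_) (z 0)
    rcases Finset.mem_union.1 hu with hu | hu
    · obtain ⟨k, -, hk⟩ := Finset.mem_image.1 hu
      have hne : (0 : Fin (2 * n + 2)) ≠ k.succ := (Fin.succ_ne_zero k).symm
      have hk' : F u 0 = F u k.succ := by simp [hF, hk]
      simp [hf, vand_eq_zero hne hk', alternant_eq_zero hne hk']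
    · obtain ⟨j, -, hj⟩ := Finset.mem_image.1 hu
      set p : Fin (2 * n + 2) := ⟨2 * j + 1, by omega⟩ with hp
      set τ : Equiv.Perm (Fin (2 * n + 2)) := Equiv.swap 1 p with hτ
      set w : Fin (2 * n + 2) → K := F u ∘ τ with hw
      have hpne : p ≠ 0 := by rw [hp]; intro h; simpa using congrArg Fin.val h
      have hτ0 : τ 0 = 0 := Equiv.swap_apply_of_ne_of_ne (by simp) hpne.symm
      have hFz : ∀ i, i ≠ 0 → F u i = z i := fun i hi => by
        obtain ⟨i, rfl⟩ := Fin.exists_succ_eq.2 hi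
        rfl
      have hw0 : w 0 = u := by simp [hw, hτ0, hF]
      have hw1 : w 1 = odds z j := by
        have : w 1 = F u p := by simp [hw, hτ]
        rw [this, hFz p hpne]; rfl
      have hwz : ∀ i : Fin (2 * n), w i.succ.succ = z (τ i.succ.succ) := fun i =>
        hFz _ fun h => by
          rw [← hτ0] at h
          exact Fin.succ_ne_zero _ (τ.injective h)
      have ih := partitionFun_mul_vand hω (n := n) (Fin.tail (Fin.tail w))
        (fun a b hab => by
          simp only [Fin.tail, hwz] at hab
          exact Fin.succ_injective _ (Fin.succ_injective _ (τ.injective (hz hab))))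
        (fun a b => by
          simp only [Fin.tail, hwz]
          exact hgen _ _)
      have key := partitionFun_mul_vand_of_frozen hω w (by rw [hw0, hw1, hj]) ih
      have hev : evens (n := n + 1) w = (Fin.cons u x' : Fin (n + 1) → K) := by
        ext i
        refine Fin.cases ?_ (fun i => ?_) i
        · exact hw0
        · have h1 : (⟨2 * (i.succ : ℕ), by omega⟩ : Fin (2 * n + 2)) ≠ 1 := fun h => by
            have := congrArg Fin.val h; simp at this
          have h2 : (⟨2 * (i.succ : ℕ), by omega⟩ : Fin (2 * n + 2)) ≠ p := fun h => by
            have := congrArg Fin.val h; simp [hp] at this; omega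
          have h3 : (⟨2 * (i.succ : ℕ), by omega⟩ : Fin (2 * n + 2)) ≠ 0 := fun h => by
            have := congrArg Fin.val h; simp at this
          change F u (τ _) = z _
          rw [hτ, Equiv.swap_apply_of_ne_of_ne h1 h2, hFz _ h3]
      have hod : odds (n := n + 1) w = odds z ∘ Equiv.swap 0 j := by
        ext i
        let q : Fin (n + 1) → Fin (2 * n + 2) := fun i => ⟨2 * i + 1, by omega⟩
        have hq : Function.Injective q := fun a b hab => Fin.ext (by simpa [q] using hab)
        have hq0 : q (Equiv.swap 0 j i) ≠ 0 := fun h => by simpa [q] using congrArg Fin.val h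
        change F u (τ (q i)) = z (q (Equiv.swap 0 j i))
        rw [← hFz _ hq0, ← hq.swap_apply]
        rfl
      rw [hev, hod, partitionFun_comp_perm hω, hw, vand_comp_perm, alternant_comp_perm] at key
      · have hs0 : ((Equiv.Perm.sign τ : ℤ) : K) ≠ 0 := by
          rcases Int.units_eq_one_or (Equiv.Perm.sign τ) with h | h <;> simp [h]
        refine sub_eq_zero.2 (mul_left_cancel₀ hs0 ?_)
        linear_combination key
      · intro a b _ h
        exact hgen _ _ (sub_eq_zero.1 h)

end Evaluation

end SixVertex

/-! ### The homogeneous limit -/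

namespace SixVertex

section HomogeneousLimit

theorem continuous_weight (ω : ℂ) {x y : ℝ → ℂ} (hx : Continuous x) (hy : Continuous y)
    (l t r b : Bool) : Continuous fun u => weight ω (x u) (y u) l t r b := by
  cases l <;> cases t <;> cases r <;> cases b <;> simp only [weight] <;> fun_prop

theorem continuous_column (ω : ℂ) {y : ℝ → ℂ} (hy : Continuous y) :
    ∀ {n : ℕ} {x : Fin n → ℝ → ℂ} (_ : ∀ i, Continuous (x i)) (t b : Bool) (l r : Fin n → Bool),
    Continuous fun u => column ω n (fun i => x i u) (y u) t b l r
  | 0, _, _, _, _, _, _ => by simp only [column_zero_apply]; fun_prop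
  | n + 1, x, hx, t, b, l, r => by
    simp only [column_succ_apply]
    exact continuous_finsetSum _ fun m _ => (continuous_weight ω (hx 0) hy _ _ _ _).mul
      (continuous_column ω hy (fun i => hx i.succ) _ _ _ _)

theorem continuous_latticeSum (ω : ℂ) {n : ℕ} {x : Fin n → ℝ → ℂ} (hx : ∀ i, Continuous (x i)) :
    ∀ {m : ℕ} {y : Fin m → ℝ → ℂ} (_ : ∀ i, Continuous (y i)) (l r : Fin n → Bool),
    Continuous fun u => latticeSum ω (fun i => x i u) (fun j => y j u) l r
  | 0, _, _, _, _ => by simp only [latticeSum_zero]; fun_prop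
  | m + 1, y, hy, l, r => by
    simp only [latticeSum_succ]
    exact continuous_finsetSum _ fun k _ => (continuous_column ω (hy 0) hx _ _ _ _).mul
      (continuous_latticeSum ω hx (fun j => hy j.succ) _ _)

/-- The product of all differences of a sequence of `N` natural numbers. -/
def diffProd (e : ℕ → ℕ) (N : ℕ) : ℂ :=
  ∏ i : Fin N, ∏ j ∈ Finset.Ioi i, ((e j : ℂ) - e i)

/-- The product of the `q`-analogues at `q = t` of all differences of a sequence. -/
def geomProd (e : ℕ → ℕ) (N : ℕ) (t : ℝ) : ℂ :=
  ∏ i : Fin N, ∏ j ∈ Finset.Ioi i, ∑ m ∈ Finset.Ico (e i) (e j), (t : ℂ) ^ m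

theorem continuous_geomProd (e : ℕ → ℕ) (N : ℕ) : Continuous (geomProd e N) := by
  refine continuous_finsetProd _ fun i _ => continuous_finsetProd _ fun j _ =>
    continuous_finsetSum _ fun m _ => ?_
  fun_prop

theorem prod_sub_eq_geomProd (e : ℕ → ℕ) (he : Monotone e) (N : ℕ) (t : ℝ) :
    ∏ i : Fin N, ∏ j ∈ Finset.Ioi i, ((t : ℂ) ^ e j - (t : ℂ) ^ e i) =
      geomProd e N t * ∏ i : Fin N, ∏ _j ∈ Finset.Ioi i, ((t : ℂ) - 1) := by
  rw [geomProd, ← Finset.prod_mul_distrib]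
  refine Finset.prod_congr rfl fun i _ => ?_
  rw [← Finset.prod_mul_distrib]
  refine Finset.prod_congr rfl fun j hj => ?_
  rw [geom_sum_Ico_mul _ (he (Finset.mem_Ioi.1 hj).le)]

theorem geomProd_one (e : ℕ → ℕ) (he : Monotone e) (N : ℕ) : geomProd e N 1 = diffProd e N := by
  refine Finset.prod_congr rfl fun i _ => Finset.prod_congr rfl fun j hj => ?_
  simp [Nat.cast_sub (he (Finset.mem_Ioi.1 hj).le)]

/-- The partition function at a geometric progression of spectral parameters. -/
def geomPartitionFun (ω : ℂ) (n : ℕ) (t : ℝ) : ℂ :=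
  partitionFun ω (fun i : Fin n => (t : ℂ) ^ (2 * (i : ℕ))) (fun i => (t : ℂ) ^ (2 * (i : ℕ) + 1))

theorem continuous_geomPartitionFun (ω : ℂ) (n : ℕ) : Continuous (geomPartitionFun ω n) :=
  continuous_latticeSum ω (x := fun i t => (t : ℂ) ^ (2 * (i : ℕ))) (fun i => by fun_prop)
    (y := fun i t => (t : ℂ) ^ (2 * (i : ℕ) + 1)) (fun i => by fun_prop) _ _

theorem monotone_exponent : Monotone fun j : ℕ => j + j / 2 := fun a b h => by
  simp only
  omega

theorem vand_geom (N : ℕ) (t : ℝ) : vand (fun i : Fin N => (t : ℂ) ^ (i : ℕ)) =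
    geomProd id N t * ∏ i : Fin N, ∏ _j ∈ Finset.Ioi i, ((t : ℂ) - 1) := by
  rw [← prod_sub_eq_geomProd id monotone_id, vand, Matrix.det_vandermonde]
  rfl

theorem alternant_geom (N : ℕ) (t : ℝ) : alternant (fun i : Fin N => (t : ℂ) ^ (i : ℕ)) =
    geomProd (fun j => j + j / 2) N t * ∏ i : Fin N, ∏ _j ∈ Finset.Ioi i, ((t : ℂ) - 1) := by
  have h : (Matrix.of fun i j : Fin N => ((t : ℂ) ^ (i : ℕ)) ^ ((j : ℕ) + j / 2)) =
      (Matrix.vandermonde fun j : Fin N => (t : ℂ) ^ ((j : ℕ) + j / 2)).transpose := by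
    ext i j
    simp [Matrix.vandermonde_apply, ← pow_mul, mul_comm]
  rw [← prod_sub_eq_geomProd _ monotone_exponent, alternant, h, Matrix.det_transpose,
    Matrix.det_vandermonde]

theorem geomPartitionFun_mul {ω : ℂ} (hω : ω ^ 2 + ω + 1 = 0) (n : ℕ) {t : ℝ} (ht : 1 < t) :
    geomPartitionFun ω n t * geomProd id (2 * n) t =
      ratioConst ω n * geomProd (fun j => j + j / 2) (2 * n) t := by
  have hω3 : ω ^ 3 = 1 := by linear_combination (ω - 1) * hω
  have hω1 : ω ≠ 1 := by rintro rfl; norm_num at hω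
  have ht0 : (t : ℂ) ≠ 0 := by exact_mod_cast (by linarith : t ≠ 0)
  have hpow : ∀ a b : ℕ, (t : ℂ) ^ a = (t : ℂ) ^ b → a = b := fun a b h =>
    pow_right_injective₀ (by linarith) ht.ne' (by exact_mod_cast h : t ^ a = t ^ b)
  have key := partitionFun_mul_vand hω (n := n) (fun i => (t : ℂ) ^ (i : ℕ))
    (fun a b h => Fin.ext (hpow _ _ h)) (fun a b h => by
      have h3 := congrArg (· ^ 3) h
      simp only [mul_pow, hω3, one_mul, ← pow_mul] at h3
      have hab : (a : ℕ) = b := by have := hpow _ _ h3; omega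
      rw [hab] at h
      exact hω1 (mul_right_cancel₀ (pow_ne_zero _ ht0) (h.symm.trans (one_mul _).symm)))
  have hZ : geomPartitionFun ω n t = partitionFun ω
      (evens fun i : Fin (2 * n) => (t : ℂ) ^ (i : ℕ)) (odds fun i => (t : ℂ) ^ (i : ℕ)) := rfl
  rw [vand_geom, alternant_geom, ← mul_assoc, ← mul_assoc, ← hZ] at key
  refine mul_right_cancel₀ ?_ key
  refine Finset.prod_ne_zero_iff.2 fun i _ => Finset.prod_ne_zero_iff.2 fun j _ => ?_
  rw [sub_ne_zero]
  exact_mod_cast ht.ne'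

theorem partitionFun_one_mul_diffProd {ω : ℂ} (hω : ω ^ 2 + ω + 1 = 0) (n : ℕ) :
    partitionFun ω (fun _ : Fin n => 1) (fun _ => 1) * diffProd id (2 * n) =
      ratioConst ω n * diffProd (fun j => j + j / 2) (2 * n) := by
  have hclosed : IsClosed {t | geomPartitionFun ω n t * geomProd id (2 * n) t =
      ratioConst ω n * geomProd (fun j => j + j / 2) (2 * n) t} :=
    isClosed_eq ((continuous_geomPartitionFun ω n).mul (continuous_geomProd _ _))
      (continuous_const.mul (continuous_geomProd _ _))
  have h1 := hclosed.closure_subset_iff.2 (fun t (ht : t ∈ Set.Ioi (1 : ℝ)) =>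
    geomPartitionFun_mul hω n ht) (by rw [closure_Ioi]; exact Set.self_mem_Ici : (1 : ℝ) ∈ _)
  rw [Set.mem_ofPred_eq, geomProd_one _ monotone_id, geomProd_one _ monotone_exponent] at h1
  have hZ : geomPartitionFun ω n 1 = partitionFun ω (fun _ : Fin n => 1) (fun _ => 1) := by
    simp only [geomPartitionFun, Complex.ofReal_one, one_pow]
  rwa [hZ] at h1

theorem prod_Ioi_castSucc {M : Type*} [CommMonoid M] {N : ℕ} (f : Fin (N + 1) → Fin (N + 1) → M) :
    ∏ i, ∏ j ∈ Finset.Ioi i, f i j = (∏ i : Fin N, f i.castSucc (Fin.last N)) *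
      ∏ i : Fin N, ∏ j ∈ Finset.Ioi i, f i.castSucc j.castSucc := by
  have h : ∀ {k : ℕ} (i : Fin k) (g : Fin k → M),
      ∏ j ∈ Finset.Ioi i, g j = ∏ j, if i < j then g j else 1 := fun i g => by
    rw [← Finset.prod_filter]
    congr 1
    ext; simp
  simp only [h, Fin.prod_univ_castSucc, Fin.castSucc_lt_castSucc_iff, Fin.castSucc_lt_last, if_true,
    lt_irrefl, if_false, mul_one]
  rw [Finset.prod_mul_distrib, mul_comm (∏ i : Fin N, f i.castSucc (Fin.last N))]
  simp [fun i : Fin N => (Fin.castSucc_lt_last i).not_gt]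

theorem diffProd_succ (e : ℕ → ℕ) (N : ℕ) :
    diffProd e (N + 1) = (∏ i ∈ Finset.range N, ((e N : ℂ) - e i)) * diffProd e N := by
  rw [diffProd, prod_Ioi_castSucc, Finset.prod_range]
  rfl

theorem diffProd_id_succ (N : ℕ) : diffProd id (N + 1) = N.factorial * diffProd id N := by
  rw [diffProd_succ]
  congr 1
  rw [← Finset.prod_range_add_one_eq_factorial, ← Finset.prod_range_reflect, Nat.cast_prod]
  refine Finset.prod_congr rfl fun i hi => ?_
  have := Finset.mem_range.1 hi
  rw [sub_eq_iff_eq_add, ← Nat.cast_add]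
  congr 1
  simp only [id]
  omega

theorem prod_exponent_sub (n : ℕ) :
    (∏ i ∈ Finset.range (2 * n), ((3 * n : ℂ) - (i + i / 2 : ℕ))) *
      (∏ i ∈ Finset.range (2 * n + 1), ((3 * n + 1 : ℂ) - (i + i / 2 : ℕ))) =
    3 ^ n * n.factorial * (3 * n + 1).factorial := by
  induction n with
  | zero => simp
  | succ n ih =>
    have h1 : ∀ i : ℕ, i + 1 + 1 + (i + 1 + 1) / 2 = i + i / 2 + 3 := fun i => by omega
    rw [show 2 * (n + 1) = 2 * n + 1 + 1 by ring, Finset.prod_range_succ', Finset.prod_range_succ',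
      Finset.prod_range_succ' _ (2 * n + 1 + 1), Finset.prod_range_succ' _ (2 * n + 1)]
    simp only [h1]
    have h2 : ∀ i : ℕ, (3 * ((n + 1 : ℕ) : ℂ)) - ((i + i / 2 + 3 : ℕ) : ℂ) =
        3 * (n : ℂ) - (i + i / 2 : ℕ) := fun i => by push_cast; ring
    have h3 : ∀ i : ℕ, (3 * ((n + 1 : ℕ) : ℂ)) + 1 - ((i + i / 2 + 3 : ℕ) : ℂ) =
        3 * (n : ℂ) + 1 - (i + i / 2 : ℕ) := fun i => by push_cast; ring
    simp only [h2, h3]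
    set P := ∏ i ∈ Finset.range (2 * n), ((3 * n : ℂ) - (i + i / 2 : ℕ))
    set Q := ∏ i ∈ Finset.range (2 * n + 1), ((3 * n + 1 : ℂ) - (i + i / 2 : ℕ))
    rw [show 3 * (n + 1) + 1 = 3 * n + 1 + 1 + 1 + 1 by ring,
      Nat.factorial_succ (3 * n + 1 + 1 + 1),
      Nat.factorial_succ (3 * n + 1 + 1), Nat.factorial_succ (3 * n + 1), Nat.factorial_succ n]
    push_cast
    norm_num
    linear_combination 3 * ((n : ℂ) + 1) * (3 * n + 2) * (3 * n + 3) * (3 * n + 4) * ih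

theorem diffProd_mul_prod_factorial (n : ℕ) :
    diffProd (fun j => j + j / 2) (2 * n) * ∏ j ∈ Finset.range n, ((n + j).factorial : ℂ) =
      3 ^ (∑ i ∈ Finset.range n, i) * (∏ j ∈ Finset.range n, ((3 * j + 1).factorial : ℂ)) *
        diffProd id (2 * n) := by
  induction n with
  | zero => simp [diffProd]
  | succ n ih =>
    have hB : (n.factorial : ℂ) * ∏ j ∈ Finset.range (n + 1), ((n + 1 + j).factorial : ℂ) =
        (∏ j ∈ Finset.range n, ((n + j).factorial : ℂ)) *
          ((2 * n).factorial * (2 * n + 1).factorial) := by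
      have h1 := Finset.prod_range_succ' (fun j => ((n + j).factorial : ℂ)) (n + 1)
      rw [Finset.prod_range_succ, Finset.prod_range_succ] at h1
      simp only [← two_mul, add_zero, ← add_assoc] at h1
      simp only [add_right_comm n 1]
      linear_combination -h1
    have hS : diffProd (fun j => j + j / 2) (2 * (n + 1)) =
        3 ^ n * n.factorial * (3 * n + 1).factorial * diffProd (fun j => j + j / 2) (2 * n) := by
      rw [show 2 * (n + 1) = 2 * n + 1 + 1 by ring, diffProd_succ, diffProd_succ,
        ← prod_exponent_sub]
      have e1 : 2 * n + 2 * n / 2 = 3 * n := by omega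
      have e2 : 2 * n + 1 + (2 * n + 1) / 2 = 3 * n + 1 := by omega
      simp only [e1, e2]
      push_cast
      ring
    have hP : diffProd id (2 * (n + 1)) =
        (2 * n).factorial * (2 * n + 1).factorial * diffProd id (2 * n) := by
      rw [show 2 * (n + 1) = 2 * n + 1 + 1 by ring, diffProd_id_succ, diffProd_id_succ]
      ring
    rw [hS, hP, Finset.prod_range_succ (fun j => ((3 * j + 1).factorial : ℂ)),
      Finset.sum_range_succ, pow_add]
    linear_combination (3 ^ n * (3 * n + 1).factorial * diffProd (fun j => j + j / 2) (2 * n)) *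
      hB +
      3 ^ n * (3 * n + 1).factorial * ((2 * n).factorial * (2 * n + 1).factorial) * ih

theorem diffProd_id_ne_zero (N : ℕ) : diffProd id N ≠ 0 := by
  induction N with
  | zero => simp [diffProd]
  | succ N ih =>
    rw [diffProd_id_succ]
    exact mul_ne_zero (by exact_mod_cast N.factorial_ne_zero) ih

theorem one_sub_pow_sq {ω : ℂ} (hω : ω ^ 2 + ω + 1 = 0) (n : ℕ) :
    (1 - ω) ^ (n * n) = ratioConst ω n * 3 ^ (∑ i ∈ Finset.range n, i) := by
  induction n with
  | zero => simp [ratioConst]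
  | succ n ih =>
    have h : (1 - ω) ^ 2 = -ω * 3 := by linear_combination hω
    rw [show (n + 1) * (n + 1) = n * n + 2 * n + 1 by ring, pow_succ, pow_add,
      pow_mul (1 - ω) 2 n, h, ih,
      ratioConst, Finset.sum_range_succ, mul_pow, pow_add]
    ring

/-- If the homogeneous partition function is `(1 - ω) ^ (n * n)` times `A`, then `A` is given by the
product formula. -/
theorem product_formula_of_partitionFun {ω : ℂ} (hω : ω ^ 2 + ω + 1 = 0) {n : ℕ} {A : ℂ}
    (hA : partitionFun ω (fun _ : Fin n => 1) (fun _ => 1) = (1 - ω) ^ (n * n) * A) :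
    A * ∏ j ∈ Finset.range n, ((n + j).factorial : ℂ) =
      ∏ j ∈ Finset.range n, ((3 * j + 1).factorial : ℂ) := by
  have hω1 : 1 - ω ≠ 0 := by
    intro h
    obtain rfl : ω = 1 := (sub_eq_zero.1 h).symm
    norm_num at hω
  have h1 := partitionFun_one_mul_diffProd hω n
  have h2 := diffProd_mul_prod_factorial n
  have h3 := one_sub_pow_sq hω n
  rw [hA] at h1
  refine mul_left_cancel₀ (mul_ne_zero (pow_ne_zero (n * n) hω1) (diffProd_id_ne_zero (2 * n))) ?_
  linear_combination (∏ j ∈ Finset.range n, ((n + j).factorial : ℂ)) * h1 + ratioConst ω n * h2 -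
    diffProd id (2 * n) * (∏ j ∈ Finset.range n, ((3 * j + 1).factorial : ℂ)) * h3

end HomogeneousLimit

end SixVertex

/-! ### The homogeneous partition function counts interlacing sequences of states -/

namespace SixVertex

section Counting

/-- The number of `true` entries among the first `i` entries of `l`. -/
def partialCount {n : ℕ} (l : Fin n → Bool) (i : ℕ) : ℕ :=
  ∑ k ∈ Finset.range i, if h : k < n then (l ⟨k, h⟩).toNat else 0

theorem partialCount_zero {n : ℕ} (l : Fin n → Bool) : partialCount l 0 = 0 := rfl

theorem partialCount_succ {n : ℕ} (l : Fin n → Bool) {i : ℕ} (hi : i < n) :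
    partialCount l (i + 1) = partialCount l i + (l ⟨i, hi⟩).toNat := by
  rw [partialCount, Finset.sum_range_succ, dif_pos hi, partialCount]

theorem partialCount_succ' {n : ℕ} (l : Fin (n + 1) → Bool) (i : ℕ) :
    partialCount l (i + 1) = (l 0).toNat + partialCount (Fin.tail l) i := by
  rw [partialCount, Finset.sum_range_succ', dif_pos n.succ_pos, add_comm, partialCount]
  simp only [Nat.add_lt_add_iff_right]
  rfl

/-- The states `l` and `r` can be joined by a column with top state `t` and bottom state `b`. -/
def Interlace {n : ℕ} (t b : Bool) (l r : Fin n → Bool) : Prop :=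
  (∀ i ≤ n, partialCount l i ≤ t.toNat + partialCount r i ∧
    t.toNat + partialCount r i ≤ partialCount l i + 1) ∧
  t.toNat + partialCount r n = partialCount l n + b.toNat

theorem interlace_succ_iff {n : ℕ} (t b : Bool) (l r : Fin (n + 1) → Bool) :
    Interlace t b l r ↔ ∃ m : Bool, (l 0).toNat + m.toNat = (r 0).toNat + t.toNat ∧
      Interlace m b (Fin.tail l) (Fin.tail r) := by
  constructor
  · rintro ⟨h, h'⟩
    have h1 := h 1 (by omega)
    rw [partialCount_succ', partialCount_succ', partialCount_zero, partialCount_zero] at h1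
    obtain ⟨m, hm⟩ : ∃ m : Bool, (l 0).toNat + m.toNat = (r 0).toNat + t.toNat := by
      revert h1
      cases l 0 <;> cases r 0 <;> cases t <;> simp
    refine ⟨m, hm, fun i hi => ?_, ?_⟩
    · have := h (i + 1) (by omega)
      rw [partialCount_succ', partialCount_succ'] at this
      omega
    · rw [partialCount_succ', partialCount_succ'] at h'
      omega
  · rintro ⟨m, hm, h, h'⟩
    refine ⟨fun i hi => ?_, ?_⟩
    · rcases i with _ | i
      · have := Bool.toNat_le t
        simp only [partialCount_zero]
        omega
      · have := h i (by omega)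
        rw [partialCount_succ', partialCount_succ']
        omega
    · rw [partialCount_succ', partialCount_succ']
      omega

theorem weight_one {R : Type*} [CommRing R] (ω : R) (l t r b : Bool) :
    weight ω 1 1 l t r b = if l.toNat + b.toNat = r.toNat + t.toNat then 1 - ω else 0 := by
  cases l <;> cases t <;> cases r <;> cases b <;> simp [weight]

theorem column_one {R : Type*} [CommRing R] (ω : R) :
    ∀ {n : ℕ} (t b : Bool) (l r : Fin n → Bool),
    column ω n (fun _ => 1) 1 t b l r = if Interlace t b l r then (1 - ω) ^ n else 0
  | 0, t, b, l, r => by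
    rw [column_zero_apply, pow_zero]
    congr 1
    cases t <;> cases b <;> simp [Interlace, partialCount_zero]
  | n + 1, t, b, l, r => by
    have ht : Fin.tail (fun _ : Fin (n + 1) => (1 : R)) = fun _ => 1 := rfl
    rw [column_succ_apply, ht]
    simp only [column_one ω, weight_one, interlace_succ_iff t, Fintype.sum_bool, Bool.exists_bool]
    cases l 0 <;> cases r 0 <;> cases t <;> simp [pow_succ, mul_comm]

/-- A sequence of states from `l` to `r` in which consecutive states are joined by columns. -/
def IsStateSeq {n m : ℕ} (l r : Fin n → Bool) (s : Fin (m + 1) → Fin n → Bool) : Prop :=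
  s 0 = l ∧ s (Fin.last m) = r ∧ ∀ j : Fin m, Interlace false true (s j.castSucc) (s j.succ)

theorem isStateSeq_cons_iff {n m : ℕ} (l r a : Fin n → Bool) (s : Fin (m + 1) → Fin n → Bool) :
    IsStateSeq (m := m + 1) l r (Fin.cons a s) ↔
      a = l ∧ Interlace false true l (s 0) ∧ IsStateSeq (s 0) r s := by
  simp only [IsStateSeq, Fin.forall_fin_succ, ← Fin.succ_last, Fin.cons_succ, Fin.cons_zero,
    Fin.castSucc_zero, ← Fin.succ_castSucc]
  aesop

theorem latticeSum_one {R : Type*} [CommRing R] (ω : R) {n : ℕ} :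
    ∀ {m : ℕ} (l r : Fin n → Bool),
    latticeSum ω (fun _ : Fin n => 1) (fun _ : Fin m => 1) l r =
      (1 - ω) ^ (n * m) * ∑ s : Fin (m + 1) → Fin n → Bool, if IsStateSeq l r s then 1 else 0
  | 0, l, r => by
    rw [latticeSum_zero, ← (Equiv.funUnique (Fin 1) (Fin n → Bool)).symm.sum_comp]
    simp [IsStateSeq, ite_and]
  | m + 1, l, r => by
    have ht : Fin.tail (fun _ : Fin (m + 1) => (1 : R)) = fun _ => 1 := rfl
    rw [latticeSum_succ, ← (Fin.consEquiv fun _ : Fin (m + 2) => Fin n → Bool).sum_comp,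
      Fintype.sum_prod_type, ht]
    simp only [latticeSum_one ω (m := m), creation, column_one, Fin.consEquiv, Equiv.coe_fn_mk,
      isStateSeq_cons_iff]
    have hk : ∀ k, (∑ s : Fin (m + 1) → Fin n → Bool, if IsStateSeq k r s then (1 : R) else 0) =
        ∑ s : Fin (m + 1) → Fin n → Bool, if s 0 = k ∧ IsStateSeq (s 0) r s then 1 else 0 := by
      intro k
      refine Finset.sum_congr rfl fun s _ => if_congr ?_ rfl rfl
      constructor
      · rintro ⟨rfl, h⟩
        exact ⟨rfl, rfl, h⟩
      · rintro ⟨rfl, h⟩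
        exact h
    simp only [hk, ite_and, Finset.mul_sum]
    rw [Finset.sum_comm, Finset.sum_comm (s := Finset.univ (α := Fin n → Bool))]
    refine Finset.sum_congr rfl fun s _ => ?_
    simp only [mul_ite, mul_one, mul_zero, Finset.sum_ite_eq, Finset.sum_ite_eq', Finset.mem_univ,
      if_true]
    split_ifs <;> simp [mul_add, pow_add, mul_comm]

end Counting

end SixVertex

/-! ### Order ideals of the tetrahedral poset and corner sums -/

section CornerSum

/-- Corner sum matrices of alternating sign matrices of size `n`. -/
structure IsCornerSum (n : ℕ) (C : ℕ → ℕ → ℕ) : Prop where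
  zero_right : ∀ i ≤ n, C i 0 = 0
  zero_left : ∀ j ≤ n, C 0 j = 0
  last_right : ∀ i ≤ n, C i n = i
  last_left : ∀ j ≤ n, C n j = j
  step_left : ∀ i < n, ∀ j ≤ n, C i j ≤ C (i + 1) j ∧ C (i + 1) j ≤ C i j + 1
  step_right : ∀ i ≤ n, ∀ j < n, C i j ≤ C i (j + 1) ∧ C i (j + 1) ≤ C i j + 1

theorem IsCornerSum.le_left {n : ℕ} {C : ℕ → ℕ → ℕ} (hC : IsCornerSum n C) {i j : ℕ} (hi : i ≤ n)
    (hj : j ≤ n) : C i j ≤ i := by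
  induction i with
  | zero => exact (hC.zero_left j hj).le
  | succ i ih =>
    have := hC.step_left i hi j hj
    have := ih (by omega)
    omega

theorem IsCornerSum.le_right {n : ℕ} {C : ℕ → ℕ → ℕ} (hC : IsCornerSum n C) {i j : ℕ} (hi : i ≤ n)
    (hj : j ≤ n) : C i j ≤ j := by
  induction j with
  | zero => exact (hC.zero_right i hi).le
  | succ j ih =>
    have := hC.step_right i hi j hj
    have := ih (by omega)
    omega

theorem IsCornerSum.add_le {n : ℕ} {C : ℕ → ℕ → ℕ} (hC : IsCornerSum n C) {i j : ℕ} (hi : i ≤ n)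
    (hj : j ≤ n) : i + j ≤ n + C i j := by
  induction hj using Nat.decreasingInduction with
  | self => rw [hC.last_right i hi, add_comm]
  | of_succ j hj ih =>
    have := hC.step_right i hi j hj
    omega

theorem mem_V3 {n : ℕ} {a b c : ℤ} :
    (a, b, c) ∈ V3 n ↔ 0 ≤ a ∧ 0 ≤ b ∧ 0 ≤ c ∧ a + b + c + 2 ≤ n := by
  simp only [V3, Finset.mem_filter, Finset.mem_product, Finset.mem_Icc]
  omega

/-- A subset is an order ideal as soon as it is closed under going down one step. -/
theorem isIdeal3_of_step {S : Set (ℤ × ℤ × ℤ)} {W I : Finset (ℤ × ℤ × ℤ)} (hI : I ⊆ W)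
    (h : ∀ u, ∀ e ∈ S, u ∈ W → u + e ∈ I → u ∈ I) : IsIdeal3 S W I := by
  refine ⟨hI, fun u v huv hv => ?_⟩
  refine huv.2.2.head_induction_on (motive := fun w _ => w ∈ I) hv ?_
  rintro u w ⟨hu, -, e, he, rfl⟩ - hw
  exact h u e he hu hw

theorem IsIdeal3.mem_of_add_mem {S : Set (ℤ × ℤ × ℤ)} {W I : Finset (ℤ × ℤ × ℤ)}
    (hI : IsIdeal3 S W I) {u e : ℤ × ℤ × ℤ} (he : e ∈ S) (hu : u ∈ W) (h : u + e ∈ I) : u ∈ I :=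
  hI.2 u (u + e) ⟨hu, hI.1 h, .single ⟨hu, hI.1 h, e, he, rfl⟩⟩ h

/-- The order ideal attached to a corner sum matrix. -/
noncomputable def cornerIdeal (n : ℕ) (C : ℕ → ℕ → ℕ) : Finset (ℤ × ℤ × ℤ) :=
  (V3 n).filter fun p => (C (1 + p.1 + p.2.1).toNat (1 + p.1 + p.2.2).toNat : ℤ) ≤ p.1

theorem mem_cornerIdeal {n : ℕ} {C : ℕ → ℕ → ℕ} {a b c : ℤ} :
    (a, b, c) ∈ cornerIdeal n C ↔
      (a, b, c) ∈ V3 n ∧ (C (1 + a + b).toNat (1 + a + c).toNat : ℤ) ≤ a := by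
  simp [cornerIdeal]

theorem IsCornerSum.isIdeal3 {n : ℕ} {C : ℕ → ℕ → ℕ} (hC : IsCornerSum n C) :
    IsIdeal3 {vb, vy, vo, vg} (V3 n) (cornerIdeal n C) := by
  refine isIdeal3_of_step (Finset.filter_subset _ _) ?_
  rintro ⟨a, b, c⟩ e he hu h
  rw [mem_cornerIdeal]
  refine ⟨hu, ?_⟩
  rw [mem_V3] at hu
  obtain ⟨i, hi⟩ := Int.eq_ofNat_of_zero_le (by omega : 0 ≤ a + b)
  obtain ⟨j, hj⟩ := Int.eq_ofNat_of_zero_le (by omega : 0 ≤ a + c)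
  have hi' : (1 + a + b).toNat = i + 1 := by omega
  have hj' : (1 + a + c).toNat = j + 1 := by omega
  rw [hi', hj']
  rcases he with rfl | rfl | rfl | rfl
  · have h1 := hC.step_right (i + 1) (by omega) j (by omega)
    simp only [vb, Prod.mk_add_mk, mem_cornerIdeal] at h
    rw [show (1 + (a + -1) + (b + 1)).toNat = i + 1 by omega,
      show (1 + (a + -1) + (c + 0)).toNat = j by omega] at h
    omega
  · have h1 := hC.step_right (i + 1) (by omega) (j + 1) (by omega)
    simp only [vy, Prod.mk_add_mk, mem_cornerIdeal] at h
    rw [show (1 + (a + 0) + (b + 0)).toNat = i + 1 by omega,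
      show (1 + (a + 0) + (c + 1)).toNat = j + 1 + 1 by omega] at h
    omega
  · have h1 := hC.step_left i (by omega) (j + 1) (by omega)
    simp only [vo, Prod.mk_add_mk, mem_cornerIdeal] at h
    rw [show (1 + (a + -1) + (b + 0)).toNat = i by omega,
      show (1 + (a + -1) + (c + 1)).toNat = j + 1 by omega] at h
    omega
  · have h1 := hC.step_left (i + 1) (by omega) (j + 1) (by omega)
    simp only [vg, Prod.mk_add_mk, mem_cornerIdeal] at h
    rw [show (1 + (a + 0) + (b + 1)).toNat = i + 1 + 1 by omega,
      show (1 + (a + 0) + (c + 0)).toNat = j + 1 by omega] at h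
    omega

/-- The element of level `a` in the chain over the position `(i, j)`. -/
def chainElt (i j a : ℕ) : ℤ × ℤ × ℤ := (a, i - 1 - a, j - 1 - a)

theorem chainElt_mem_V3 {n i j a : ℕ} :
    chainElt i j a ∈ V3 n ↔ i + j ≤ n + a ∧ a < i ∧ a < j := by
  rw [chainElt, mem_V3]
  omega

theorem chainElt_mem_cornerIdeal {n i j a : ℕ} {C : ℕ → ℕ → ℕ} :
    chainElt i j a ∈ cornerIdeal n C ↔ chainElt i j a ∈ V3 n ∧ C i j ≤ a := by
  rw [chainElt, mem_cornerIdeal, show (1 + (a : ℤ) + (i - 1 - a)).toNat = i by omega,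
    show (1 + (a : ℤ) + (j - 1 - a)).toNat = j by omega, Int.ofNat_le]

theorem exists_chainElt_eq {n : ℕ} {p : ℤ × ℤ × ℤ} (hp : p ∈ V3 n) :
    ∃ i j a : ℕ, i ≤ n ∧ j ≤ n ∧ p = chainElt i j a := by
  obtain ⟨a, b, c⟩ := p
  rw [mem_V3] at hp
  refine ⟨(1 + a + b).toNat, (1 + a + c).toNat, a.toNat, by omega, by omega, ?_⟩
  simp only [chainElt, Prod.mk.injEq]
  omega

theorem IsCornerSum.le_of_cornerIdeal_subset {n : ℕ} {C D : ℕ → ℕ → ℕ} (hC : IsCornerSum n C)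
    (hD : IsCornerSum n D) (h : cornerIdeal n C ⊆ cornerIdeal n D) {i j : ℕ} (hi : i ≤ n)
    (hj : j ≤ n) : D i j ≤ C i j := by
  by_contra! hlt
  have h1 := hC.add_le hi hj
  have h2 := hD.le_left hi hj
  have h3 := hD.le_right hi hj
  have := (chainElt_mem_cornerIdeal.1 (h (chainElt_mem_cornerIdeal.2
    ⟨chainElt_mem_V3.2 ⟨h1, by omega, by omega⟩, le_rfl⟩))).2
  omega

/-- The least level at which the chain over `(i, j)` meets `I`, with a default at the top. -/
theorem exists_threshold {n : ℕ} {I : Finset (ℤ × ℤ × ℤ)}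
    (hI : IsIdeal3 {vb, vy, vo, vg} (V3 n) I) {i j : ℕ} (hi : i ≤ n) (hj : j ≤ n) :
    ∃ c, i + j ≤ n + c ∧ c ≤ i ∧ c ≤ j ∧ ∀ a, chainElt i j a ∈ V3 n →
      (chainElt i j a ∈ I ↔ c ≤ a) := by
  have hup : ∀ a, chainElt i j a ∈ I → chainElt i j (a + 1) ∈ V3 n → chainElt i j (a + 1) ∈ I := by
    intro a ha h
    have h' := chainElt_mem_V3.1 h
    have hmid : chainElt i j (a + 1) + vb ∈ V3 n := by
      simp only [chainElt, vb, Prod.mk_add_mk, mem_V3]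
      omega
    refine hI.mem_of_add_mem (e := vb) (by simp) h (hI.mem_of_add_mem (e := vy) (by simp) hmid ?_)
    convert ha using 1
    simp only [chainElt, vb, vy, Prod.mk_add_mk, Prod.mk.injEq]
    omega
  have hex : ∃ c, i + j ≤ n + c ∧ (chainElt i j c ∈ I ∨ c = min i j) :=
    ⟨min i j, by omega, Or.inr rfl⟩
  refine ⟨Nat.find hex, (Nat.find_spec hex).1, ?_, ?_, fun a ha => ⟨fun h => ?_, fun h => ?_⟩⟩
  · exact (Nat.find_min' hex ⟨by omega, Or.inr rfl⟩).trans (min_le_left i j)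
  · exact (Nat.find_min' hex ⟨by omega, Or.inr rfl⟩).trans (min_le_right i j)
  · exact Nat.find_min' hex ⟨(chainElt_mem_V3.1 ha).1, Or.inl h⟩
  · have hV := chainElt_mem_V3.1 ha
    have hc : chainElt i j (Nat.find hex) ∈ I :=
      (Nat.find_spec hex).2.resolve_right (by omega)
    induction a, h using Nat.le_induction with
    | base => exact hc
    | succ a h ih =>
      have h1 := (Nat.find_spec hex).1
      have h2 : chainElt i j a ∈ V3 n := chainElt_mem_V3.2 ⟨by omega, by omega, by omega⟩
      exact hup a (ih h2 (chainElt_mem_V3.1 h2)) ha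

theorem exists_cornerIdeal_eq {n : ℕ} {I : Finset (ℤ × ℤ × ℤ)}
    (hI : IsIdeal3 {vb, vy, vo, vg} (V3 n) I) : ∃ C, IsCornerSum n C ∧ cornerIdeal n C = I := by
  choose! C h1 h2 h3 h4 using
    fun i (hi : i ≤ n) j (hj : j ≤ n) => exists_threshold hI hi hj
  have down : ∀ {i j a i' j' a' : ℕ}, i ≤ n → j ≤ n → i' ≤ n → j' ≤ n →
      chainElt i' j' a' - chainElt i j a ∈ ({vb, vy, vo, vg} : Set (ℤ × ℤ × ℤ)) →
      chainElt i j a ∈ V3 n → chainElt i' j' a' ∈ V3 n → C i' j' ≤ a' → C i j ≤ a := by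
    intro i j a i' j' a' hi hj hi' hj' he hV hV' h
    refine (h4 i hi j hj a hV).1 (hI.mem_of_add_mem he hV ?_)
    rw [add_sub_cancel]
    exact (h4 i' hi' j' hj' a' hV').2 h
  refine ⟨C, ⟨fun i hi => ?_, fun j hj => ?_, fun i hi => ?_, fun j hj => ?_, fun i hi j hj => ?_,
    fun i hi j hj => ?_⟩, ?_⟩
  · have := h3 i hi 0 (by omega)
    omega
  · have := h2 0 (by omega) j hj
    omega
  · have := h1 i hi n le_rfl
    have := h2 i hi n le_rfl
    omega
  · have := h1 n le_rfl j hj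
    have := h3 n le_rfl j hj
    omega
  · have a1 := h1 i hi.le j hj
    have a2 := h2 i hi.le j hj
    have a3 := h3 i hi.le j hj
    have b1 := h1 (i + 1) hi j hj
    have b2 := h2 (i + 1) hi j hj
    have b3 := h3 (i + 1) hi j hj
    constructor
    · by_contra! hlt
      refine hlt.not_ge (down (i' := i + 1) (j' := j) (a' := C (i + 1) j) hi.le hj hi hj ?_
        (chainElt_mem_V3.2 ?_) (chainElt_mem_V3.2 ?_) le_rfl)
      · have : chainElt (i + 1) j (C (i + 1) j) - chainElt i j (C (i + 1) j) = vg := by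
          simp only [chainElt, vg, Prod.mk_sub_mk, Prod.mk.injEq]
          omega
        simp [this]
      · omega
      · omega
    · by_contra! hlt
      refine hlt.not_ge (down (i' := i) (j' := j) (a' := C i j) hi hj hi.le hj ?_
        (chainElt_mem_V3.2 ?_) (chainElt_mem_V3.2 ?_) le_rfl)
      · have : chainElt i j (C i j) - chainElt (i + 1) j (C i j + 1) = vo := by
          simp only [chainElt, vo, Prod.mk_sub_mk, Prod.mk.injEq]
          omega
        simp [this]
      · omega
      · omega
  · have a1 := h1 i hi j hj.le
    have a2 := h2 i hi j hj.le
    have a3 := h3 i hi j hj.le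
    have b1 := h1 i hi (j + 1) hj
    have b2 := h2 i hi (j + 1) hj
    have b3 := h3 i hi (j + 1) hj
    constructor
    · by_contra! hlt
      refine hlt.not_ge (down (i' := i) (j' := j + 1) (a' := C i (j + 1)) hi hj.le hi hj ?_
        (chainElt_mem_V3.2 ?_) (chainElt_mem_V3.2 ?_) le_rfl)
      · have : chainElt i (j + 1) (C i (j + 1)) - chainElt i j (C i (j + 1)) = vy := by
          simp only [chainElt, vy, Prod.mk_sub_mk, Prod.mk.injEq]
          omega
        simp [this]
      · omega
      · omega
    · by_contra! hlt
      refine hlt.not_ge (down (i' := i) (j' := j) (a' := C i j) hi hj hi hj.le ?_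
        (chainElt_mem_V3.2 ?_) (chainElt_mem_V3.2 ?_) le_rfl)
      · have : chainElt i j (C i j) - chainElt i (j + 1) (C i j + 1) = vb := by
          simp only [chainElt, vb, Prod.mk_sub_mk, Prod.mk.injEq]
          omega
        simp [this]
      · omega
      · omega
  · ext p
    constructor
    · intro hp
      obtain ⟨i, j, a, hi, hj, rfl⟩ := exists_chainElt_eq (Finset.mem_filter.1 hp).1
      rw [chainElt_mem_cornerIdeal] at hp
      exact (h4 i hi j hj a hp.1).2 hp.2
    · intro hp
      have hV := hI.1 hp
      obtain ⟨i, j, a, hi, hj, rfl⟩ := exists_chainElt_eq hV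
      exact chainElt_mem_cornerIdeal.2 ⟨hV, (h4 i hi j hj a hV).1 hp⟩

end CornerSum

/-! ### State sequences and corner sums -/

namespace SixVertex

section StateSeq

/-- The corner sums of a sequence of states. -/
def cornerSum {n m : ℕ} (s : Fin (m + 1) → Fin n → Bool) (i j : ℕ) : ℕ :=
  partialCount (s (Fin.ofNat (m + 1) j)) i

theorem partialCount_false {n : ℕ} (i : ℕ) : partialCount (fun _ : Fin n => false) i = 0 := by
  simp [partialCount]

theorem partialCount_true {n i : ℕ} (hi : i ≤ n) : partialCount (fun _ : Fin n => true) i = i := by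
  induction i with
  | zero => rfl
  | succ i ih => rw [partialCount_succ _ hi, ih (by omega)]; rfl

theorem eq_of_partialCount_eq {n : ℕ} {l r : Fin n → Bool}
    (h : ∀ i ≤ n, partialCount l i = partialCount r i) : l = r := by
  ext k
  have h1 := h (k + 1) k.2
  rw [partialCount_succ _ k.2, partialCount_succ _ k.2, h k k.2.le, add_right_inj] at h1
  revert h1
  cases l k <;> cases r k <;> simp

theorem exists_partialCount_eq {n : ℕ} {f : ℕ → ℕ} (h0 : f 0 = 0)
    (hf : ∀ i < n, f i ≤ f (i + 1) ∧ f (i + 1) ≤ f i + 1) :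
    ∃ l : Fin n → Bool, ∀ i ≤ n, partialCount l i = f i := by
  refine ⟨fun k => decide (f k < f (k + 1)), fun i hi => ?_⟩
  induction i with
  | zero => rw [partialCount_zero, h0]
  | succ i ih =>
    have := hf i hi
    rw [partialCount_succ _ hi, ih (by omega)]
    by_cases h : f i < f (i + 1) <;> simp [h] <;> omega

theorem ofNat_castSucc {m : ℕ} (j : Fin m) : Fin.ofNat (m + 1) j = j.castSucc := by
  ext; simp

theorem ofNat_succ {m : ℕ} (j : Fin m) : Fin.ofNat (m + 1) (j + 1) = j.succ := by
  ext; simp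

theorem ofNat_self (m : ℕ) : Fin.ofNat (m + 1) m = Fin.last m := by
  ext; simp

theorem isCornerSum_cornerSum {n : ℕ} {s : Fin (n + 1) → Fin n → Bool}
    (hs : IsStateSeq (fun _ => false) (fun _ => true) s) : IsCornerSum n (cornerSum s) := by
  obtain ⟨h0, h1, h2⟩ := hs
  have h3 : ∀ j (hj : j < n), Interlace false true (s (Fin.ofNat (n + 1) j))
      (s (Fin.ofNat (n + 1) (j + 1))) := fun j hj => by
    have := h2 ⟨j, hj⟩
    rwa [← ofNat_castSucc, ← ofNat_succ] at this
  have hzero : ∀ i ≤ n, cornerSum s i 0 = 0 := fun i hi => by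
    have : Fin.ofNat (n + 1) 0 = 0 := rfl
    rw [cornerSum, this, h0, partialCount_false]
  refine ⟨hzero, fun j hj => rfl, fun i hi => ?_, fun j hj => ?_, fun i hi j hj => ?_,
    fun i hi j hj => ?_⟩
  · rw [cornerSum, ofNat_self, h1, partialCount_true hi]
  · induction j with
    | zero => exact hzero n le_rfl
    | succ j ih =>
      have := (h3 j hj).2
      have := ih (by omega)
      simp only [cornerSum, Bool.toNat_false, Bool.toNat_true] at *
      omega
  · have := Bool.toNat_le (s (Fin.ofNat (n + 1) j) ⟨i, hi⟩)
    rw [cornerSum, cornerSum, partialCount_succ _ hi]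
    omega
  · have := (h3 j hj).1 i hi
    simp only [cornerSum, Bool.toNat_false] at *
    omega

theorem cornerSum_injective {n m : ℕ} {s s' : Fin (m + 1) → Fin n → Bool}
    (h : ∀ i ≤ n, ∀ j ≤ m, cornerSum s i j = cornerSum s' i j) : s = s' := by
  funext j
  refine eq_of_partialCount_eq fun i hi => ?_
  have := h i hi j (by omega)
  simpa [cornerSum] using this

theorem exists_cornerSum_eq {n : ℕ} {C : ℕ → ℕ → ℕ} (hC : IsCornerSum n C) :
    ∃ s : Fin (n + 1) → Fin n → Bool, IsStateSeq (fun _ => false) (fun _ => true) s ∧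
      ∀ i ≤ n, ∀ j ≤ n, cornerSum s i j = C i j := by
  choose s hs using fun j : Fin (n + 1) => exists_partialCount_eq (n := n) (f := fun i => C i j)
    (hC.zero_left j (by omega)) (fun i hi => hC.step_left i hi j (by omega))
  refine ⟨s, ⟨?_, ?_, fun j => ⟨fun i hi => ?_, ?_⟩⟩, fun i hi j hj => ?_⟩
  · refine eq_of_partialCount_eq fun i hi => ?_
    rw [hs 0 i hi, partialCount_false]
    exact hC.zero_right i hi
  · refine eq_of_partialCount_eq fun i hi => ?_
    rw [hs _ i hi, partialCount_true hi]
    exact hC.last_right i hi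
  · rw [hs _ i hi, hs _ i hi]
    simpa using hC.step_right i hi j j.2
  · rw [hs _ n le_rfl, hs _ n le_rfl]
    simp [hC.last_left j (by omega), hC.last_left (j + 1) (by omega)]
  · rw [cornerSum, hs _ i hi]
    simp [Nat.mod_eq_of_lt (show j < n + 1 by omega)]

theorem cornerIdeal_congr {n : ℕ} {C D : ℕ → ℕ → ℕ} (h : ∀ i ≤ n, ∀ j ≤ n, C i j = D i j) :
    cornerIdeal n C = cornerIdeal n D := by
  refine Finset.filter_congr fun p hp => ?_
  obtain ⟨a, b, c⟩ := p
  rw [mem_V3] at hp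
  rw [h _ (by simp only; omega) _ (by simp only; omega)]

theorem card_filter_isStateSeq (n : ℕ) :
    (Finset.univ.filter fun s : Fin (n + 1) → Fin n → Bool =>
      IsStateSeq (fun _ => false) (fun _ => true) s).card =
    (ideals3 {vb, vy, vo, vg} (V3 n)).card := by
  refine Finset.card_bij (fun s _ => cornerIdeal n (cornerSum s)) ?_ ?_ ?_
  · intro s hs
    exact Finset.mem_filter.2 ⟨Finset.mem_powerset.2 (Finset.filter_subset _ _),
      (isCornerSum_cornerSum (Finset.mem_filter.1 hs).2).isIdeal3⟩
  · intro s hs s' hs' h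
    have hC := isCornerSum_cornerSum (Finset.mem_filter.1 hs).2
    have hD := isCornerSum_cornerSum (Finset.mem_filter.1 hs').2
    exact cornerSum_injective fun i hi j hj => le_antisymm
      (hD.le_of_cornerIdeal_subset hC h.ge hi hj) (hC.le_of_cornerIdeal_subset hD h.le hi hj)
  · intro I hI
    obtain ⟨C, hC, rfl⟩ := exists_cornerIdeal_eq (Finset.mem_filter.1 hI).2
    obtain ⟨s, hs, h⟩ := exists_cornerSum_eq hC
    exact ⟨s, Finset.mem_filter.2 ⟨Finset.mem_univ _, hs⟩, cornerIdeal_congr h⟩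

theorem partitionFun_one {R : Type*} [CommRing R] (ω : R) (n : ℕ) :
    partitionFun ω (fun _ : Fin n => 1) (fun _ => 1) =
      (1 - ω) ^ (n * n) * (ideals3 {vb, vy, vo, vg} (V3 n)).card := by
  rw [partitionFun, latticeSum_one, ← card_filter_isStateSeq, Finset.sum_boole]

end StateSeq

end SixVertex

/-- The number of order ideals of `T_n({b,y,o,g})` is given by the ASM product formula:
`|J| · ∏_{j=0}^{n-1} (n+j)! = ∏_{j=0}^{n-1} (3j+1)!`. -/
theorem stmt10 (n : ℕ) (hn : 1 ≤ n) :
    (ideals3 {vb, vy, vo, vg} (V3 n)).card * ∏ j ∈ Finset.range n, Nat.factorial (n + j) =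
      ∏ j ∈ Finset.range n, Nat.factorial (3 * j + 1) := by
  obtain ⟨ω, hω⟩ : ∃ ω : ℂ, ω ^ 2 + ω + 1 = 0 := by
    have h := (Complex.isPrimitiveRoot_exp 3 (by norm_num)).geom_sum_eq_zero (by norm_num)
    simp only [Finset.sum_range_succ, Finset.sum_range_zero, zero_add, pow_zero, pow_one] at h
    exact ⟨_, by linear_combination h⟩
  exact_mod_cast SixVertex.product_formula_of_partitionFun hω (SixVertex.partitionFun_one ω n)
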